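/- Assume 1 − (d−1)ν − (2K−1)dμ_B > 0. Let S ⊆ I1 with |S| = k (1 ≤ k < K), let P_S denote the orthogonal projection onto the column span of the blocks {A_l : l ∈ S}, and set v = Σ_{l∈I1∖S} A_l x̃_l. Then max_{l∈S} ‖A_l^T P_S v‖_2 ≥ max_{l∈I1∖S} ‖A_l^T P_S v‖_2. -/

import Mathlib

/- Setting: a measurement matrix `A ∈ ℝ^{m×n}` with `n = L·d`, partitioned into `L` column
blocks of size `m×d`; columns are indexed by pairs `(l, j)` (block `l`, position `j`). -/

noncomputable section

open Finset Matrix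

/-- Euclidean (ℓ₂) norm of a finitely indexed real vector. -/
def e2norm {ι : Type*} [Fintype ι] (v : ι → ℝ) : ℝ := Real.sqrt (∑ i, v i ^ 2)

/-- Euclidean inner (dot) product of two real vectors. -/
def dotp {ι : Type*} [Fintype ι] (u v : ι → ℝ) : ℝ := ∑ i, u i * v i

/-- The `(l, j)` column of the block matrix `A` (block `l`, position `j` inside the block). -/
def acol {m L d : ℕ} (A : Matrix (Fin m) (Fin L × Fin d) ℝ) (l : Fin L) (j : Fin d) :
    Fin m → ℝ :=
  fun i => A i (l, j)

/-- `A_lᵀ v` : correlation of the `l`-th block of `A` with a vector `v ∈ ℝ^m`. -/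
def blkT {m L d : ℕ} (A : Matrix (Fin m) (Fin L × Fin d) ℝ) (l : Fin L) (v : Fin m → ℝ) :
    Fin d → ℝ :=
  fun j => dotp (acol A l j) v

/-- Spectral norm (largest singular value) `ρ(X)` of a real matrix, as the supremum of
`‖Xu‖₂ / ‖u‖₂` over nonzero `u`. -/
def specNorm {p q : ℕ} (X : Matrix (Fin p) (Fin q) ℝ) : ℝ :=
  ⨆ u : {u : Fin q → ℝ // u ≠ 0}, e2norm (X *ᵥ u.1) / e2norm u.1

/-- The `d × d` cross-Gram matrix `A_iᵀ A_j` of two blocks of `A`. -/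
def bgram {m L d : ℕ} (A : Matrix (Fin m) (Fin L × Fin d) ℝ) (i j : Fin L) :
    Matrix (Fin d) (Fin d) ℝ :=
  fun a b => dotp (acol A i a) (acol A j b)

/-- Block-coherence `μ_B = max_{i ≠ j} (1/d) ρ(A_iᵀ A_j)`. -/
def blockCoh {m L d : ℕ} (A : Matrix (Fin m) (Fin L × Fin d) ℝ) : ℝ :=
  ⨆ p : {p : Fin L × Fin L // p.1 ≠ p.2},
    (1 / (d : ℝ)) * specNorm (bgram A p.1.1 p.1.2)

/-- Sub-coherence `ν`: the maximum of `|a_iᵀ a_j|` over pairs of distinct columns lying in the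
same block of `A`. -/
def subCoh {m L d : ℕ} (A : Matrix (Fin m) (Fin L × Fin d) ℝ) : ℝ :=
  ⨆ t : {t : Fin L × Fin d × Fin d // t.2.1 ≠ t.2.2},
    |dotp (acol A t.1.1 t.1.2.1) (acol A t.1.1 t.1.2.2)|

lemma e2norm_eq_norm {ι : Type*} [Fintype ι] (v : ι → ℝ) : e2norm v = ‖WithLp.toLp 2 v‖ := by
  simp [e2norm, EuclideanSpace.norm_eq]

lemma e2norm_nonneg' {ι : Type*} [Fintype ι] (v : ι → ℝ) : 0 ≤ e2norm v := Real.sqrt_nonneg _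

lemma e2norm_sq' {ι : Type*} [Fintype ι] (v : ι → ℝ) : e2norm v ^ 2 = ∑ i, v i ^ 2 :=
  Real.sq_sqrt (Finset.sum_nonneg fun i _ => sq_nonneg _)

lemma e2norm_add_le' {ι : Type*} [Fintype ι] (u v : ι → ℝ) :
    e2norm (u + v) ≤ e2norm u + e2norm v := by
  simp only [e2norm_eq_norm, WithLp.toLp_add]
  exact norm_add_le _ _

lemma e2norm_sub_le' {ι : Type*} [Fintype ι] (u v : ι → ℝ) :
    e2norm u ≤ e2norm (u + v) + e2norm v := by
  simp only [e2norm_eq_norm, WithLp.toLp_add]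
  have := norm_sub_le (WithLp.toLp 2 u + WithLp.toLp 2 v) (WithLp.toLp 2 v)
  simpa using this

lemma e2norm_sum_le' {ι κ : Type*} [Fintype ι] (s : Finset κ) (f : κ → ι → ℝ) :
    e2norm (∑ k ∈ s, f k) ≤ ∑ k ∈ s, e2norm (f k) := by
  simp only [e2norm_eq_norm, WithLp.toLp_sum]
  exact norm_sum_le _ _

lemma dotp_le' {ι : Type*} [Fintype ι] (u v : ι → ℝ) : dotp u v ≤ e2norm u * e2norm v :=
  Real.sum_mul_le_sqrt_mul_sqrt _ _ _

lemma specNorm_bound {p q : ℕ} (X : Matrix (Fin p) (Fin q) ℝ) (u : Fin q → ℝ) :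
    e2norm (X *ᵥ u) ≤ specNorm X * e2norm u := by
  by_cases hu : u = 0
  · subst hu
    simp [e2norm]
  have hfro : ∀ w : Fin q → ℝ, e2norm (X *ᵥ w) ≤ Real.sqrt (∑ i, ∑ j, X i j ^ 2) * e2norm w := by
    intro w
    unfold e2norm
    have h0 : 0 ≤ ∑ i, ∑ j, X i j ^ 2 :=
      Finset.sum_nonneg fun i _ => Finset.sum_nonneg fun j _ => sq_nonneg (X i j)
    rw [← Real.sqrt_mul h0]
    apply Real.sqrt_le_sqrt
    rw [Finset.sum_mul]
    exact Finset.sum_le_sum fun i _ => Finset.sum_mul_sq_le_sq_mul_sq Finset.univ (fun j => X i j) w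
  have hpos : ∀ w : Fin q → ℝ, w ≠ 0 → 0 < e2norm w := by
    intro w hw
    rw [e2norm_eq_norm, norm_pos_iff]
    simpa using hw
  have hb : BddAbove (Set.range fun u : {u : Fin q → ℝ // u ≠ 0} =>
      e2norm (X *ᵥ u.1) / e2norm u.1) := by
    refine ⟨Real.sqrt (∑ i, ∑ j, X i j ^ 2), ?_⟩
    rintro _ ⟨w, rfl⟩
    exact (div_le_iff₀ (hpos _ w.2)).2 (hfro _)
  exact (div_le_iff₀ (hpos _ hu)).1 (le_ciSup hb ⟨u, hu⟩)

lemma specNorm_nonneg' {p q : ℕ} (X : Matrix (Fin p) (Fin q) ℝ) : 0 ≤ specNorm X :=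
  Real.iSup_nonneg fun _ => div_nonneg (e2norm_nonneg' _) (e2norm_nonneg' _)

lemma blockCoh_nonneg' {m L d : ℕ} (A : Matrix (Fin m) (Fin L × Fin d) ℝ) : 0 ≤ blockCoh A :=
  Real.iSup_nonneg fun _ => mul_nonneg (by positivity) (specNorm_nonneg' _)

lemma cross_bound {m L d : ℕ} (hd : 0 < d) (A : Matrix (Fin m) (Fin L × Fin d) ℝ)
    (i j : Fin L) (hij : i ≠ j) (u : Fin d → ℝ) :
    e2norm (bgram A i j *ᵥ u) ≤ d * blockCoh A * e2norm u := by
  refine (specNorm_bound _ _).trans (mul_le_mul_of_nonneg_right ?_ (e2norm_nonneg' _))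
  have h := le_ciSup (f := fun p : {p : Fin L × Fin L // p.1 ≠ p.2} =>
    (1 / (d : ℝ)) * specNorm (bgram A p.1.1 p.1.2)) (Set.finite_range _).bddAbove ⟨(i, j), hij⟩
  have hd' : (0 : ℝ) < d := by exact_mod_cast hd
  have h2 : (1 / (d : ℝ)) * specNorm (bgram A i j) ≤ blockCoh A := h
  rw [one_div, inv_mul_le_iff₀ hd'] at h2
  exact h2

lemma diag_bound {m L d : ℕ} (A : Matrix (Fin m) (Fin L × Fin d) ℝ)
    (hA : ∀ l j, e2norm (acol A l j) = 1) (l : Fin L) (u : Fin d → ℝ) :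
    (1 - ((d : ℝ) - 1) * subCoh A) * e2norm u ≤ e2norm (bgram A l l *ᵥ u) := by
  rcases (e2norm_nonneg' u).eq_or_lt with h0 | hpos
  · rw [← h0, mul_zero]; exact e2norm_nonneg' _
  have hν0 : 0 ≤ subCoh A := Real.iSup_nonneg fun _ => abs_nonneg _
  have hν : ∀ a b : Fin d, a ≠ b → |bgram A l l a b| ≤ subCoh A := fun a b hab =>
    le_ciSup (f := fun t : {t : Fin L × Fin d × Fin d // t.2.1 ≠ t.2.2} =>
      |dotp (acol A t.1.1 t.1.2.1) (acol A t.1.1 t.1.2.2)|)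
      (Set.finite_range _).bddAbove ⟨(l, a, b), hab⟩
  have hdiag : ∀ a : Fin d, bgram A l l a a = 1 := by
    intro a
    have := e2norm_sq' (acol A l a)
    rw [hA] at this
    simp only [bgram, dotp, ← pow_two]
    linarith
  have hterm : ∀ a b : Fin d, (if a = b then (1 + subCoh A) * u a ^ 2 else 0)
      - subCoh A * (|u a| * |u b|) ≤ u a * (bgram A l l a b * u b) := by
    intro a b
    split_ifs with hab
    · subst hab
      rw [hdiag, abs_mul_abs_self]
      nlinarith
    · have h1 := neg_abs_le (u a * (bgram A l l a b * u b))
      rw [abs_mul, abs_mul] at h1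
      have h2 := mul_le_mul_of_nonneg_right (hν a b hab)
        (mul_nonneg (abs_nonneg (u a)) (abs_nonneg (u b)))
      nlinarith
  have hsum := Finset.sum_le_sum fun a (_ : a ∈ Finset.univ) =>
    Finset.sum_le_sum fun b (_ : b ∈ Finset.univ) => hterm a b
  have hR : ∑ a, ∑ b, u a * (bgram A l l a b * u b) = dotp u (bgram A l l *ᵥ u) := by
    simp only [dotp, Matrix.mulVec, dotProduct, Finset.mul_sum]
  have hL : ∑ a, ∑ b, ((if a = b then (1 + subCoh A) * u a ^ 2 else 0)
      - subCoh A * (|u a| * |u b|)) = (1 + subCoh A) * e2norm u ^ 2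
        - subCoh A * (∑ a, |u a|) ^ 2 := by
    simp only [Finset.sum_sub_distrib, Finset.sum_ite_eq, Finset.mem_univ, if_true, e2norm_sq']
    rw [← Finset.mul_sum, pow_two (∑ a, |u a|), Finset.sum_mul_sum, Finset.mul_sum]
    simp only [Finset.mul_sum]
  have hcs : (∑ a, |u a|) ^ 2 ≤ d * e2norm u ^ 2 := by
    have := sq_sum_le_card_mul_sum_sq (s := Finset.univ) (f := fun a => |u a|)
    simpa [e2norm_sq'] using this
  rw [hR, hL] at hsum
  have hd1 := dotp_le' u (bgram A l l *ᵥ u)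
  have := mul_le_mul_of_nonneg_left hcs hν0
  refine le_of_mul_le_mul_left ?_ hpos
  nlinarith

lemma blkT_sum {m L d : ℕ} (A : Matrix (Fin m) (Fin L × Fin d) ℝ) (S : Finset (Fin L))
    (c : Fin L → Fin d → ℝ) (w : Fin m → ℝ)
    (hw : ∀ i, w i = ∑ l ∈ S, ∑ j, A i (l, j) * c l j) (l : Fin L) :
    blkT A l w = ∑ j ∈ S, bgram A l j *ᵥ c j := by
  ext a
  simp only [blkT, dotp, hw, Finset.sum_apply, Matrix.mulVec, dotProduct, bgram, acol,
    Finset.mul_sum, Finset.sum_mul]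
  rw [Finset.sum_comm]
  refine Finset.sum_congr rfl fun j _ => ?_
  rw [Finset.sum_comm]
  refine Finset.sum_congr rfl fun b _ => Finset.sum_congr rfl fun i _ => by ring

/-- **Eq. (32) of the paper (Appendix B).**  Assume `1 - (d-1)ν - (2K-1)dμ_B > 0`.  For
`S ⊆ I1` with `|S| = k` (`1 ≤ k < K`), `v = Σ_{l ∈ I1∖S} A_l x̃_l` and `P_S v` the orthogonal
projection of `v` onto the span of the blocks `A_l, l ∈ S`,
`max_{l ∈ S} ‖A_lᵀ P_S v‖₂ ≥ max_{l ∈ I1∖S} ‖A_lᵀ P_S v‖₂`. -/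
theorem stmt10 {m L d K k : ℕ}
    (hm : m < L * d) (hd : 0 < d)
    (A : Matrix (Fin m) (Fin L × Fin d) ℝ)
    (hA : ∀ l j, e2norm (acol A l j) = 1)
    (μB ν : ℝ) (hμB : μB = blockCoh A) (hν : ν = subCoh A)
    (hcond : 0 < 1 - ((d : ℝ) - 1) * ν - (2 * (K : ℝ) - 1) * d * μB)
    (I1 : Finset (Fin L)) (hcard : I1.card = K) (hKL : K < L)
    (S : Finset (Fin L)) (hS : S ⊆ I1) (hSk : S.card = k) (hk1 : 1 ≤ k) (hk : k < K)
    (xt : Fin L → Fin d → ℝ)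
    (v : Fin m → ℝ) (hv : v = fun i => ∑ l ∈ I1 \ S, ∑ j, A i (l, j) * xt l j)
    (PSv : Fin m → ℝ)
    (hPSv1 : ∃ c : Fin L → Fin d → ℝ, ∀ i, PSv i = ∑ l ∈ S, ∑ j, A i (l, j) * c l j)
    (hPSv2 : ∀ l ∈ S, ∀ j, dotp (acol A l j) (fun i => v i - PSv i) = 0) :
    (⨆ l : {l : Fin L // l ∈ I1 \ S}, e2norm (blkT A l.1 PSv)) ≤
      ⨆ l : {l : Fin L // l ∈ S}, e2norm (blkT A l.1 PSv) := by
  obtain ⟨c, hc⟩ := hPSv1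
  have hB := blkT_sum A S c PSv hc
  have hSne : S.Nonempty := Finset.card_pos.1 (by omega)
  obtain ⟨l0, hl0, hmax⟩ := S.exists_max_image (fun l => e2norm (c l)) hSne
  have hμ0 : 0 ≤ μB := hμB ▸ blockCoh_nonneg' A
  have hM := e2norm_nonneg' (c l0)
  have hdμ : 0 ≤ d * μB := by positivity
  have hcross : ∀ l, ∀ T : Finset (Fin L), T ⊆ S → l ∉ T →
      e2norm (∑ j ∈ T, bgram A l j *ᵥ c j) ≤ T.card * (d * μB * e2norm (c l0)) := by
    intro l T hT hl
    refine (e2norm_sum_le' _ _).trans ?_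
    rw [← nsmul_eq_mul]
    refine Finset.sum_le_card_nsmul _ _ _ fun j hj => ?_
    have h1 := cross_bound hd A l j (fun h => hl (h ▸ hj)) (c j)
    rw [← hμB] at h1
    exact h1.trans (mul_le_mul_of_nonneg_left (hmax j (hT hj)) hdμ)
  have hlow : (1 - ((d : ℝ) - 1) * ν) * e2norm (c l0) ≤
      e2norm (blkT A l0 PSv) + ((k : ℝ) - 1) * (d * μB * e2norm (c l0)) := by
    have h1 := hcross l0 (S.erase l0) (Finset.erase_subset _ _) (Finset.notMem_erase _ _)
    rw [Finset.card_erase_of_mem hl0, hSk, Nat.cast_sub hk1, Nat.cast_one] at h1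
    have h2 := e2norm_sub_le' (bgram A l0 l0 *ᵥ c l0) (∑ j ∈ S.erase l0, bgram A l0 j *ᵥ c j)
    rw [Finset.add_sum_erase S (fun j => bgram A l0 j *ᵥ c j) hl0, ← hB] at h2
    have h3 := diag_bound A hA l0 (c l0)
    rw [← hν] at h3
    linarith
  have hkK : (k : ℝ) ≤ K := by exact_mod_cast hk.le
  have hle : e2norm (blkT A l0 PSv) ≤ ⨆ l : {l : Fin L // l ∈ S}, e2norm (blkT A l.1 PSv) :=
    le_ciSup (f := fun l : {l : Fin L // l ∈ S} => e2norm (blkT A l.1 PSv))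
      (Set.finite_range _).bddAbove ⟨l0, hl0⟩
  refine Real.iSup_le (fun l => le_trans ?_ hle) ((e2norm_nonneg' _).trans hle)
  have hl := hcross l.1 S (Finset.Subset.refl _) (Finset.mem_sdiff.1 l.2).2
  rw [← hB, hSk] at hl
  have h5 : 0 ≤ (1 - ((d : ℝ) - 1) * ν - (2 * (k : ℝ) - 1) * (d * μB)) := by
    have := mul_le_mul_of_nonneg_right hkK hdμ
    nlinarith
  have h6 := mul_nonneg h5 hM
  nlinarith
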